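/- arXiv:2512.10853 — 4 statements merged into one kernel-verified Lean document; each statement's English description precedes it below -/
import Mathlib

section
/- Let H be a real inner product space, let G and D be linear subspaces of H with ⟨g, d⟩ = 0 for every g ∈ G and d ∈ D, and let T : H → H be a linear map with ⟨d, T d⟩ > 0 for every nonzero d ∈ D. If a = T d₀ for some d₀ ∈ D, and a = g + T d for some g ∈ G and d ∈ D, then g = 0 and d = d₀. -/
open scoped RealInnerProductSpace

/-- Proposition 2 (antisymmetric technological change: full passthrough into
reallocation), abstract form: if the technological change `a` equals `T d₀` for a
feasible reallocation `d₀ ∈ D`, then in any decomposition `a = g + T d` one has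
`g = 0` and `d = d₀`. -/
theorem antisymmetric_change_full_passthrough
    {H : Type*} [NormedAddCommGroup H] [InnerProductSpace ℝ H]
    (G D : Submodule ℝ H) (T : H →ₗ[ℝ] H)
    (horth : ∀ g ∈ G, ∀ d ∈ D, ⟪g, d⟫ = 0)
    (hpos : ∀ d ∈ D, d ≠ 0 → 0 < ⟪d, T d⟫)
    (a g d d₀ : H) (hd₀ : d₀ ∈ D) (ha : a = T d₀) (hg : g ∈ G) (hd : d ∈ D)
    (hdec : a = g + T d) :
    g = 0 ∧ d = d₀ := by
  -- `T (d₀ - d) = g` is orthogonal to `d₀ - d ∈ D`, so positivity of `T` on `D` forces `d₀ = d`.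
  have hT : T (d₀ - d) = g := by
    rw [map_sub, ← ha, hdec, add_sub_cancel_right]
  have hmem : d₀ - d ∈ D := D.sub_mem hd₀ hd
  have hzero : d₀ - d = 0 := by
    by_contra hne
    have hlt := hpos _ hmem hne
    rw [hT, real_inner_comm, horth g hg _ hmem] at hlt
    exact lt_irrefl _ hlt
  refine ⟨?_, (sub_eq_zero.mp hzero).symm⟩
  rw [← hT, hzero, map_zero]
end

section
/- Let Σ be a real n×n positive definite matrix. Then for every real n×n matrix Σ̇ there exists a unique real n×n matrix Ṙ satisfying the Sylvester equation Σ·Ṙ + Ṙ·Σ = Σ̇ − Σ̇ᵀ; moreover this Ṙ is antisymmetric (Ṙᵀ = −Ṙ), and the matrix Ẇ := Σ̇ − Σ·Ṙ is symmetric (Ẇᵀ = Ẇ). -/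
/-!
The Sylvester operator `R ↦ S R + R S` is a linear endomorphism of the finite-dimensional space of
matrices, so it is bijective as soon as it is injective. Injectivity is an energy argument: if
`S R + R S = 0`, then multiplying by `Rᵀ` and taking traces gives
`tr (Rᵀ S R) + tr (R S Rᵀ) = 0`. The two terms are the sums of the values of the quadratic form of
`S` at the columns and at the rows of `R`, so both vanish and `R = 0`
(`eq_zero_of_sylvester_eq_zero`).

Since `S` is symmetric and the right-hand side `Ṡ - Ṡᵀ` is antisymmetric, `-Rᵀ` solves the equation
whenever `R` does, so uniqueness gives `Rᵀ = -R`. The symmetry of `Ṡ - S R` is then the Sylvester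
equation rearranged.
-/

open Matrix

/-- `tr (Bᵀ S B)` sums the quadratic form of `S` over the columns of `B`. -/
lemma trace_transpose_mul_mul_eq_sum {n : ℕ} (S B : Matrix (Fin n) (Fin n) ℝ) :
    (Bᵀ * (S * B)).trace = ∑ j, B.col j ⬝ᵥ S.mulVec (B.col j) := rfl

lemma quadForm_nonneg {n : ℕ} {S : Matrix (Fin n) (Fin n) ℝ}
    (hpos : ∀ x : Fin n → ℝ, x ≠ 0 → 0 < x ⬝ᵥ S.mulVec x) (x : Fin n → ℝ) :
    0 ≤ x ⬝ᵥ S.mulVec x := by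
  rcases eq_or_ne x 0 with rfl | hx
  · simp
  · exact (hpos x hx).le

lemma trace_transpose_mul_mul_nonneg {n : ℕ} {S : Matrix (Fin n) (Fin n) ℝ}
    (hpos : ∀ x : Fin n → ℝ, x ≠ 0 → 0 < x ⬝ᵥ S.mulVec x) (B : Matrix (Fin n) (Fin n) ℝ) :
    0 ≤ (Bᵀ * (S * B)).trace := by
  rw [trace_transpose_mul_mul_eq_sum]
  exact Finset.sum_nonneg fun j _ => quadForm_nonneg hpos _

lemma eq_zero_of_trace_transpose_mul_mul_eq_zero {n : ℕ} {S : Matrix (Fin n) (Fin n) ℝ}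
    (hpos : ∀ x : Fin n → ℝ, x ≠ 0 → 0 < x ⬝ᵥ S.mulVec x) {B : Matrix (Fin n) (Fin n) ℝ}
    (h : (Bᵀ * (S * B)).trace = 0) : B = 0 := by
  rw [trace_transpose_mul_mul_eq_sum,
    Finset.sum_eq_zero_iff_of_nonneg fun j _ => quadForm_nonneg hpos _] at h
  ext i j
  have hj : B.col j = 0 := by
    by_contra hne
    exact (hpos _ hne).ne' (h j (Finset.mem_univ j))
  exact congrFun hj i

/-- The Sylvester operator of a matrix with positive quadratic form has trivial kernel. -/
lemma eq_zero_of_sylvester_eq_zero {n : ℕ} {S : Matrix (Fin n) (Fin n) ℝ}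
    (hpos : ∀ x : Fin n → ℝ, x ≠ 0 → 0 < x ⬝ᵥ S.mulVec x) {R : Matrix (Fin n) (Fin n) ℝ}
    (h : S * R + R * S = 0) : R = 0 := by
  have hsum : (Rᵀ * (S * R)).trace + (Rᵀᵀ * (S * Rᵀ)).trace = 0 := by
    have hcyc : (Rᵀᵀ * (S * Rᵀ)).trace = (Rᵀ * (R * S)).trace := by
      rw [transpose_transpose, ← Matrix.mul_assoc, trace_mul_comm]
    rw [hcyc, ← trace_add, ← Matrix.mul_add, h, Matrix.mul_zero, trace_zero]
  have h1 := trace_transpose_mul_mul_nonneg hpos R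
  have h2 := trace_transpose_mul_mul_nonneg hpos Rᵀ
  exact eq_zero_of_trace_transpose_mul_mul_eq_zero hpos (by linarith)

/-- The Sylvester operator `R ↦ S R + R S` as a linear map on matrices. -/
def sylvesterMap {n : ℕ} (S : Matrix (Fin n) (Fin n) ℝ) :
    Matrix (Fin n) (Fin n) ℝ →ₗ[ℝ] Matrix (Fin n) (Fin n) ℝ :=
  LinearMap.mulLeft ℝ S + LinearMap.mulRight ℝ S

lemma sylvesterMap_injective {n : ℕ} {S : Matrix (Fin n) (Fin n) ℝ}
    (hpos : ∀ x : Fin n → ℝ, x ≠ 0 → 0 < x ⬝ᵥ S.mulVec x) :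
    Function.Injective (sylvesterMap S) :=
  (injective_iff_map_eq_zero _).2 fun _ h => eq_zero_of_sylvester_eq_zero hpos h

/-- Proposition 3 of the paper: for a positive definite complementarity matrix `S`
(symmetric, with `xᵀ S x > 0` for all nonzero `x`), and any technological change `Σ̇`,
the Sylvester equation `S Ṙ + Ṙ S = Ṡ - Ṡᵀ` has a unique solution `Ṙ`; moreover this
solution is antisymmetric and `Ẇ := Ṡ - S Ṙ` is symmetric. -/
theorem sylvester_comparative_statics {n : ℕ}
    (S : Matrix (Fin n) (Fin n) ℝ) (hsym : Sᵀ = S)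
    (hpos : ∀ x : Fin n → ℝ, x ≠ 0 → 0 < x ⬝ᵥ S.mulVec x)
    (Sd : Matrix (Fin n) (Fin n) ℝ) :
    (∃! R : Matrix (Fin n) (Fin n) ℝ, S * R + R * S = Sd - Sdᵀ) ∧
    (∀ R : Matrix (Fin n) (Fin n) ℝ, S * R + R * S = Sd - Sdᵀ →
      Rᵀ = -R ∧ (Sd - S * R)ᵀ = Sd - S * R) := by
  have hinj := sylvesterMap_injective hpos
  refine ⟨?_, fun R hR => ?_⟩
  · exact Function.Bijective.existsUnique ⟨hinj, LinearMap.injective_iff_surjective.1 hinj⟩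
      (Sd - Sdᵀ)
  · have hT : Rᵀ * S + S * Rᵀ = Sdᵀ - Sd := by
      simpa [hsym] using congrArg transpose hR
    have hneg : S * -Rᵀ + -Rᵀ * S = S * R + R * S := by
      rw [hR, ← neg_sub, ← hT, Matrix.mul_neg, Matrix.neg_mul]
      abel
    have hanti : Rᵀ = -R := neg_eq_iff_eq_neg.1 (hinj hneg)
    refine ⟨hanti, ?_⟩
    rw [transpose_sub, transpose_mul, hsym, hanti, Matrix.neg_mul, sub_neg_eq_add,
      eq_sub_iff_add_eq, add_assoc, add_comm (R * S), hR]
    abel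
end

section
/- Let (X, μ) and (Z, ν) be measurable spaces equipped with finite measures, let y : X → Z → ℝ be a bounded measurable function (jointly measurable in the pair of arguments), and let τ : X → Z be a measurable bijection with measurable inverse whose pushforward satisfies τ_*μ = ν. Then the supremum, over all measurable bijections T : X → Z with measurable inverse and T_*μ = ν, of ∫_X y(x, T(x)) dμ(x) equals the supremum, over all measurable bijections r : X → X with measurable inverse and r_*μ = μ, of ∫_X y(r(x), τ(x)) dμ(x). Both suprema are over nonempty families (containing τ and the identity, respectively), and the optimizers correspond via τ_t ∘ r_t = τ. -/
open MeasureTheory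

/-!
Given an assignment `T` and a rearrangement `r` with `T ∘ r = τ`, worker `r x` holds job `τ x` under
both, so the change of variables along the measure-preserving `r` equates the two aggregate outputs
(`integral_assignment_eq`). For fixed `τ` this relation is a bijection between assignments and
rearrangements, `r = T⁻¹ ∘ τ` and `T = τ ∘ r⁻¹`, so the two sets of attained values coincide, and
with them their suprema.
-/

/-- Aggregate output is the same for an assignment `T` and a rearrangement `r` with `T ∘ r = τ`.
The change of variables along a measurable equivalence holds for an arbitrary integrand. -/
lemma integral_assignment_eq {X Z : Type*} [MeasurableSpace X] [MeasurableSpace Z]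
    {μ : Measure X} (y : X → Z → ℝ) {τ T : X ≃ᵐ Z} {r : X ≃ᵐ X}
    (hr : μ.map r = μ) (h : ∀ x, T (r x) = τ x) :
    ∫ x, y (r x) (τ x) ∂μ = ∫ x, y x (T x) ∂μ := by
  conv_rhs => rw [← hr, integral_map_equiv]
  simp only [h]

/-- Lemma 1 of the paper (equivalence between the assignment problem and the
rearrangement problem): given a bounded measurable output `y`, finite measures
`μ` on workers and `ν` on jobs, and a measure-preserving measurable bijection
`τ` from `(X, μ)` to `(Z, ν)`, the supremum of aggregate output over assignments
(measure-preserving measurable bijections `T : X → Z`) equals the supremum over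
rearrangements (measure-preserving measurable bijections `r : X → X`) of the
aggregate output obtained when worker `r x` takes the job `τ x`. -/
theorem assignment_eq_rearrangement
    {X Z : Type*} [MeasurableSpace X] [MeasurableSpace Z]
    (μ : Measure X) (ν : Measure Z) [IsFiniteMeasure μ] [IsFiniteMeasure ν]
    (y : X → Z → ℝ) (C : ℝ) (hybdd : ∀ x z, |y x z| ≤ C)
    (hymeas : Measurable fun p : X × Z => y p.1 p.2)
    (τ : X ≃ᵐ Z) (hτ : μ.map τ = ν) :
    sSup ((fun T : X ≃ᵐ Z => ∫ x, y x (T x) ∂μ) '' {T | μ.map T = ν}) =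
      sSup ((fun r : X ≃ᵐ X => ∫ x, y (r x) (τ x) ∂μ) '' {r | μ.map r = μ}) := by
  have pτ : MeasurePreserving τ μ ν := ⟨τ.measurable, hτ⟩
  congr 1
  apply Set.Subset.antisymm
  · rintro _ ⟨T, hT, rfl⟩
    have pT : MeasurePreserving T μ ν := ⟨T.measurable, hT⟩
    have hr : μ.map (τ.trans T.symm) = μ := (pT.symm.comp pτ).map_eq
    exact ⟨τ.trans T.symm, hr, integral_assignment_eq y hr fun x => by simp⟩
  · rintro _ ⟨r, hr, rfl⟩
    have pr : MeasurePreserving r μ μ := ⟨r.measurable, hr⟩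
    have hT : μ.map (r.symm.trans τ) = ν := (pτ.comp pr.symm).map_eq
    exact ⟨r.symm.trans τ, hT, (integral_assignment_eq y hr fun x => by simp).symm⟩
end

section
/- Let X and Z be nonempty compact topological (metrizable, measurable) spaces, y : X × Z → ℝ continuous, μ a finite Borel measure on X whose support is all of X (every nonempty open subset of X has positive μ-measure), and ν a finite Borel measure on Z. Suppose w : X → ℝ and v : Z → ℝ are continuous, satisfy w(x) + v(z) ≥ y(x,z) for all (x,z), and minimize ∫_X w' dμ + ∫_Z v' dν among all pairs of continuous functions (w', v') with w'(x) + v'(z) ≥ y(x,z) for all (x,z). Then for every x ∈ X, w(x) = sup_{z ∈ Z} ( y(x,z) − v(z) ). -/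
open MeasureTheory

/-!
The maximized surplus `s x = ⨆ z, (y (x, z) - v z)` is continuous by compactness of `Z`, satisfies
`s ≤ w` by feasibility, and `(s, v)` is again feasible. Optimality of `(w, v)` gives
`∫ w ∂μ ≤ ∫ s ∂μ`, hence `s = w` almost everywhere; two continuous functions that agree almost
everywhere for a measure of full support agree everywhere.
-/

/-- Key step of the paper's Lemma B.1: if `(w, v)` is an optimal solution of the dual
(Monge–Kantorovich) problem — feasible (`w x + v z ≥ y (x,z)`) and minimizing total
payments among continuous feasible pairs — and the worker measure `μ` has full
support, then worker earnings equal the maximized surplus: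
`w x = sup_z (y (x,z) - v z)` for every `x`. -/
theorem dual_optimal_earnings_eq_sup_surplus
    {X Z : Type*}
    [TopologicalSpace X] [CompactSpace X] [TopologicalSpace.MetrizableSpace X]
    [MeasurableSpace X] [BorelSpace X] [Nonempty X]
    [TopologicalSpace Z] [CompactSpace Z] [TopologicalSpace.MetrizableSpace Z]
    [MeasurableSpace Z] [BorelSpace Z] [Nonempty Z]
    (y : X × Z → ℝ) (hy : Continuous y)
    (μ : Measure X) [IsFiniteMeasure μ]
    (hμ : ∀ U : Set X, IsOpen U → U.Nonempty → 0 < μ U)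
    (ν : Measure Z) [IsFiniteMeasure ν]
    (w : X → ℝ) (v : Z → ℝ) (hw : Continuous w) (hv : Continuous v)
    (hfeas : ∀ x z, y (x, z) ≤ w x + v z)
    (hmin : ∀ (w' : X → ℝ) (v' : Z → ℝ), Continuous w' → Continuous v' →
      (∀ x z, y (x, z) ≤ w' x + v' z) →
      (∫ x, w x ∂μ) + (∫ z, v z ∂ν) ≤ (∫ x, w' x ∂μ) + (∫ z, v' z ∂ν)) :
    ∀ x, w x = ⨆ z : Z, (y (x, z) - v z) := by
  have hcont (x : X) : Continuous fun z => y (x, z) - v z := by fun_prop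
  have hbdd (x : X) : BddAbove (Set.range fun z => y (x, z) - v z) :=
    (isCompact_range (hcont x)).bddAbove
  set s : X → ℝ := fun x => ⨆ z : Z, (y (x, z) - v z) with hs_def
  have hs : Continuous s := by
    have h := IsCompact.continuous_sSup (f := fun (x : X) (z : Z) => y (x, z) - v z)
      isCompact_univ (hy.sub (hv.comp continuous_snd))
    simpa only [Set.image_univ, hs_def, iSup] using h
  have hsw : s ≤ w := fun x => ciSup_le fun z => by linarith [hfeas x z]
  have hs_feas (x : X) (z : Z) : y (x, z) ≤ s x + v z := by
    linarith [le_ciSup (hbdd x) z]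
  have hint {f : X → ℝ} (hf : Continuous f) : Integrable f μ :=
    hf.integrable_of_hasCompactSupport (HasCompactSupport.of_compactSpace f)
  have heq : ∫ x, s x ∂μ = ∫ x, w x ∂μ :=
    le_antisymm (integral_mono (hint hs) (hint hw) hsw) (by linarith [hmin s v hs hv hs_feas])
  have hae : s =ᵐ[μ] w :=
    (integral_eq_iff_of_ae_le (hint hs) (hint hw) (Filter.Eventually.of_forall hsw)).1 heq
  have : μ.IsOpenPosMeasure := ⟨fun U hU hne => (hμ U hU hne).ne'⟩
  exact fun x => (congrFun (Measure.eq_of_ae_eq hae hs hw) x).symm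
end
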